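/- Let n ≥ 3 and let α_1, …, α_n ∈ ℝ (indices mod n) satisfy sin(α_{j+1} − α_j) ≠ 0 for all j, and let P_θ be the associated n×n perpendicular-bisector evolute matrix. Then the characteristic polynomial χ of P_θ satisfies χ(−X) = (−1)ⁿ·χ(X); i.e. the spectrum of the P-evolute map p ↦ P_θ·p is symmetric with respect to the origin, opposite eigenvalues having the same algebraic multiplicities. -/

import Mathlib

open Real Polynomial

/-- The perpendicular-bisector evolute matrix `P_θ` associated with the cyclic
sequence of normal angles `α`. -/
noncomputable def Pmat (n : ℕ) [NeZero n] (α : Fin n → ℝ) : Matrix (Fin n) (Fin n) ℝ :=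
  Matrix.of fun j k =>
    if k = j then
      (Real.cos (α j - α (j - 1)) / Real.sin (α j - α (j - 1)) -
        Real.cos (α (j + 1) - α j) / Real.sin (α (j + 1) - α j)) / 2
    else if k = j + 1 then 1 / (2 * Real.sin (α (j + 1) - α j))
    else if k = j - 1 then -(1 / (2 * Real.sin (α j - α (j - 1))))
    else 0

/-- Cyclic shift matrix. -/
noncomputable def shiftQ (n : ℕ) [NeZero n] : Matrix (Fin n) (Fin n) ℝ :=
  Matrix.of fun j k => if k = j + 1 then 1 else 0

lemma shiftQ_mul_apply (n : ℕ) [NeZero n] (A : Matrix (Fin n) (Fin n) ℝ) (j k : Fin n) :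
    (shiftQ n * A) j k = A (j + 1) k := by
  simp [shiftQ, Matrix.mul_apply]

lemma shiftQT_mul_apply (n : ℕ) [NeZero n] (A : Matrix (Fin n) (Fin n) ℝ) (j k : Fin n) :
    ((shiftQ n).transpose * A) j k = A (j - 1) k := by
  have h : ∀ i : Fin n, (j = i + 1) = (i = j - 1) := fun i =>
    propext ⟨fun h => by rw [h, add_sub_cancel_right], fun h => by rw [h, sub_add_cancel]⟩
  simp [shiftQ, Matrix.mul_apply, h]

lemma shiftQ_mul_T (n : ℕ) [NeZero n] : shiftQ n * (shiftQ n).transpose = 1 := by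
  ext j k
  rw [shiftQ_mul_apply]
  simp [shiftQ, Matrix.one_apply]

lemma shiftQ_T_mul (n : ℕ) [NeZero n] : (shiftQ n).transpose * shiftQ n = 1 :=
  mul_eq_one_comm.mp (shiftQ_mul_T n)

lemma Pmat_eq (n : ℕ) (hn : 3 ≤ n) [NeZero n] (α : Fin n → ℝ) (b c : Fin n → ℝ)
    (hb : ∀ j, b j = 1 / (2 * Real.sin (α (j + 1) - α j)))
    (hc : ∀ j, c j = Real.cos (α (j + 1) - α j) / Real.sin (α (j + 1) - α j) / 2) :
    Pmat n α = -Matrix.diagonal c + Matrix.diagonal b * shiftQ n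
      - (shiftQ n).transpose * Matrix.diagonal b
      + (shiftQ n).transpose * (Matrix.diagonal c * shiftQ n) := by
  ext j k
  have h1 : j + 1 ≠ j := by
    intro h
    have h' : (1 : Fin n) = 0 := by simpa using h
    have := congrArg Fin.val h'
    rw [Fin.val_one', Nat.mod_eq_of_lt (by omega)] at this
    simp at this
  have h2 : j - 1 ≠ j := by
    intro h
    have h' : (1 : Fin n) = 0 := by simpa using h
    have := congrArg Fin.val h'
    rw [Fin.val_one', Nat.mod_eq_of_lt (by omega)] at this
    simp at this
  have h3 : j - 1 ≠ j + 1 := by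
    intro h
    have h' : (1 : Fin n) + 1 = 0 := by
      have : j + (1 + 1) = j + 0 := by rw [← add_assoc, ← h]; simp
      exact add_left_cancel this
    have := congrArg Fin.val h'
    rw [Fin.val_add, Fin.val_one', Nat.mod_eq_of_lt (by omega : 1 < n),
      Nat.mod_eq_of_lt (by omega)] at this
    simp at this
  simp only [Matrix.add_apply, Matrix.sub_apply, Matrix.neg_apply, shiftQT_mul_apply,
    Matrix.diagonal_mul]
  simp only [Pmat, shiftQ, Matrix.of_apply, Matrix.diagonal_apply, sub_add_cancel, hb, hc]
  by_cases e1 : k = j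
  · subst e1
    simp [h1.symm, h2]
    ring
  by_cases e2 : k = j + 1
  · subst e2
    simp [h1, h1.symm, h3]
  by_cases e3 : k = j - 1
  · subst e3
    simp [h2, h2.symm, h3]
  · simp [e1, e2, e3, Ne.symm e1, Ne.symm e3]

lemma block_det {n : ℕ} (b c : Fin n → ℝ) (hbc : ∀ j, b j ^ 2 = c j ^ 2 + 1 / 4) (x : ℝ) :
    (Matrix.fromBlocks (Matrix.diagonal fun j => -c j - x) (Matrix.diagonal b)
      (Matrix.diagonal fun j => -b j) (Matrix.diagonal fun j => c j - x)).det
      = (x ^ 2 + 1 / 4) ^ n := by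
  have hb : ∀ j, b j ≠ 0 := fun j h => by have := hbc j; rw [h] at this; nlinarith [sq_nonneg (c j)]
  have e : Matrix.fromBlocks (Matrix.diagonal fun j => -c j - x) (Matrix.diagonal b)
      (Matrix.diagonal fun j => -b j) (Matrix.diagonal fun j => c j - x) *
      Matrix.fromBlocks 1 (Matrix.diagonal fun j => (c j - x) / b j) 0 1 =
      Matrix.fromBlocks (Matrix.diagonal fun j => -c j - x)
        (Matrix.diagonal fun j => (x ^ 2 + 1 / 4) / b j)
      (Matrix.diagonal fun j => -b j) 0 := by
    rw [Matrix.fromBlocks_multiply]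
    simp only [Matrix.mul_one, Matrix.mul_zero, add_zero, Matrix.diagonal_mul_diagonal,
      Matrix.diagonal_add]
    congr 1
    · congr 1; ext j; have := hbc j; have := hb j; field_simp; linear_combination 4 * hbc j
    · rw [← Matrix.diagonal_zero]; congr 1; ext j; have := hb j; field_simp; ring
  have e2 : Matrix.fromBlocks (Matrix.diagonal fun j => -c j - x)
        (Matrix.diagonal fun j => (x ^ 2 + 1 / 4) / b j)
      (Matrix.diagonal fun j => -b j) 0 * Matrix.fromBlocks 0 (-1) 1 0 =
      Matrix.fromBlocks (Matrix.diagonal fun j => (x ^ 2 + 1 / 4) / b j)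
        (-Matrix.diagonal fun j => -c j - x) 0 (Matrix.diagonal b) := by
    rw [Matrix.fromBlocks_multiply]
    simp [Matrix.diagonal_neg]
  have hJ : (Matrix.fromBlocks 0 (-1) 1 0 : Matrix (Fin n ⊕ Fin n) (Fin n ⊕ Fin n) ℝ).det = 1 := by
    have h : (Matrix.fromBlocks 0 (-1) 1 0 : Matrix (Fin n ⊕ Fin n) (Fin n ⊕ Fin n) ℝ) =
      Matrix.fromBlocks 1 (-1) 0 1 * Matrix.fromBlocks 1 0 1 1 * Matrix.fromBlocks 1 (-1) 0 1 := by
      simp [Matrix.fromBlocks_multiply]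
    rw [h]; simp [Matrix.det_fromBlocks_zero₂₁, Matrix.det_fromBlocks_zero₁₂]
  have d1 := congrArg Matrix.det e
  have d2 := congrArg Matrix.det e2
  rw [Matrix.det_mul, Matrix.det_fromBlocks_zero₂₁, Matrix.det_one, mul_one, mul_one] at d1
  rw [Matrix.det_mul, hJ, mul_one, Matrix.det_fromBlocks_zero₂₁, Matrix.det_diagonal,
    Matrix.det_diagonal, ← Finset.prod_mul_distrib] at d2
  rw [d1, d2]
  simp [hb]

lemma jacobi {n : ℕ} (M N : Matrix (Fin n ⊕ Fin n) (Fin n ⊕ Fin n) ℝ) (l : ℝ)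
    (h : M * N = l • 1) : M.det * N.toBlocks₂₂.det = M.toBlocks₁₁.det * l ^ n := by
  have e : M * Matrix.fromBlocks 1 N.toBlocks₁₂ 0 N.toBlocks₂₂ =
      Matrix.fromBlocks M.toBlocks₁₁ 0 M.toBlocks₂₁ (l • 1) := by
    conv at h => lhs; rw [← Matrix.fromBlocks_toBlocks M, ← Matrix.fromBlocks_toBlocks N]
    rw [Matrix.fromBlocks_multiply, ← Matrix.fromBlocks_one, Matrix.fromBlocks_smul,
      Matrix.fromBlocks_inj] at h
    conv_lhs => rw [← Matrix.fromBlocks_toBlocks M]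
    rw [Matrix.fromBlocks_multiply]
    simp [h.2.1, h.2.2.2]
  have d := congrArg Matrix.det e
  simpa [Matrix.det_mul, Matrix.det_fromBlocks_zero₂₁, Matrix.det_fromBlocks_zero₁₂,
    Matrix.det_smul] using d

lemma key (n : ℕ) [NeZero n] (b c : Fin n → ℝ) (hbc : ∀ j, b j ^ 2 = c j ^ 2 + 1 / 4)
    (P : Matrix (Fin n) (Fin n) ℝ)
    (hP : P = -Matrix.diagonal c + Matrix.diagonal b * shiftQ n
      - (shiftQ n).transpose * Matrix.diagonal b
      + (shiftQ n).transpose * (Matrix.diagonal c * shiftQ n)) (x : ℝ) :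
    (P.transpose + (2 * x) • 1).det = (-1) ^ n * (P - (2 * x) • 1).det := by
  let K : ℝ → Matrix (Fin n ⊕ Fin n) (Fin n ⊕ Fin n) ℝ := fun x =>
    Matrix.fromBlocks (Matrix.diagonal fun j => -c j - x) (Matrix.diagonal b)
      (Matrix.diagonal fun j => -b j) (Matrix.diagonal fun j => c j - x)
  let U : Matrix (Fin n ⊕ Fin n) (Fin n ⊕ Fin n) ℝ :=
    Matrix.fromBlocks 1 1 (shiftQ n) (-shiftQ n)
  let V : Matrix (Fin n ⊕ Fin n) (Fin n ⊕ Fin n) ℝ :=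
    Matrix.fromBlocks 1 (shiftQ n).transpose 1 (-(shiftQ n).transpose)
  have hVU : V * U = (2 : ℝ) • 1 := by
    simp only [V, U, Matrix.fromBlocks_multiply]
    rw [← Matrix.fromBlocks_one, Matrix.fromBlocks_smul]
    simp [shiftQ_T_mul, two_smul]
  have hUV : U * V = (2 : ℝ) • 1 := by
    simp only [V, U, Matrix.fromBlocks_multiply]
    rw [← Matrix.fromBlocks_one, Matrix.fromBlocks_smul]
    simp [shiftQ_mul_T, two_smul]
  have hK : K x * K (-x) = (-(x ^ 2 + 1 / 4)) • 1 := by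
    simp only [K, Matrix.fromBlocks_multiply, Matrix.diagonal_mul_diagonal, Matrix.diagonal_add]
    rw [← Matrix.fromBlocks_one, Matrix.fromBlocks_smul, ← Matrix.diagonal_one,
      ← Matrix.diagonal_smul, smul_zero, ← Matrix.diagonal_zero]
    congr 2 <;> ext j <;> simp <;> linarith [hbc j]
  have hd : ∀ f : Fin n → ℝ, ∀ y : ℝ, (Matrix.diagonal fun j => f j - y)
      = Matrix.diagonal f - y • 1 := by
    intro f y
    rw [← Matrix.diagonal_one, ← Matrix.diagonal_smul, Matrix.diagonal_sub]; congr 1; ext; simp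
  have hM : ∀ y, (V * K y * U).toBlocks₁₁ = P - (2 * y) • 1 := by
    intro y
    simp only [V, U, K, Matrix.fromBlocks_multiply, Matrix.toBlocks_fromBlocks₁₁, hd, hP,
      ← Matrix.diagonal_neg]
    have := shiftQ_T_mul n
    simp only [Matrix.mul_add, Matrix.add_mul, Matrix.mul_sub, Matrix.sub_mul, Matrix.one_mul,
      Matrix.mul_one, Matrix.mul_neg, Matrix.neg_mul, Matrix.mul_smul, Matrix.smul_mul, this,
      Matrix.mul_assoc, mul_smul, two_smul]
    abel
  have hN : ∀ y, (V * K y * U).toBlocks₂₂ = P.transpose - (2 * y) • 1 := by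
    intro y
    simp only [V, U, K, Matrix.fromBlocks_multiply, Matrix.toBlocks_fromBlocks₂₂, hd, hP,
      ← Matrix.diagonal_neg, Matrix.transpose_add, Matrix.transpose_sub, Matrix.transpose_neg,
      Matrix.transpose_mul, Matrix.diagonal_transpose, Matrix.transpose_transpose]
    have := shiftQ_T_mul n
    simp only [Matrix.mul_add, Matrix.add_mul, Matrix.mul_sub, Matrix.sub_mul, Matrix.one_mul,
      Matrix.mul_one, Matrix.mul_neg, Matrix.neg_mul, Matrix.mul_smul, Matrix.smul_mul, this,
      Matrix.mul_assoc, mul_smul, two_smul, neg_neg, smul_neg]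
    abel
  have hMN : (V * K x * U) * (V * K (-x) * U) = (-(4 * (x ^ 2 + 1 / 4))) • 1 := by
    calc _ = V * K x * (U * V) * (K (-x) * U) := by simp only [Matrix.mul_assoc]
      _ = (2 : ℝ) • (V * (K x * K (-x)) * U) := by
        rw [hUV]; simp [Matrix.mul_assoc]
      _ = _ := by
        rw [hK]; simp only [Matrix.mul_smul, Matrix.smul_mul, Matrix.mul_one, hVU, smul_smul]
        congr 1; ring
  have hdet : (V * K x * U).det = (4 * (x ^ 2 + 1 / 4)) ^ n := by
    have h1 : (K x).det = (x ^ 2 + 1 / 4) ^ n := block_det b c hbc x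
    have h2 := congrArg Matrix.det hVU
    rw [Matrix.det_mul, Matrix.det_smul, Matrix.det_one, Fintype.card_sum, Fintype.card_fin] at h2
    rw [Matrix.det_mul, Matrix.det_mul, h1, mul_pow]
    have : (4 : ℝ) ^ n = 2 ^ (n + n) := by rw [← two_mul, pow_mul]; norm_num
    rw [this]
    linear_combination (x ^ 2 + 1 / 4) ^ n * h2
  have hj := jacobi _ _ _ hMN
  rw [hdet, hM, hN, neg_pow] at hj
  have hne : (4 * (x ^ 2 + 1 / 4)) ^ n ≠ 0 := by positivity
  apply mul_left_cancel₀ hne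
  have : P.transpose + (2 * x) • 1 = P.transpose - (2 * -x) • 1 := by
    rw [mul_neg, neg_smul, sub_neg_eq_add]
  rw [this, hj]; ring

/-- The spectrum of the perpendicular-bisector evolute matrix is
symmetric with respect to the origin, with opposite eigenvalues having the same
algebraic multiplicities: `χ(−X) = (−1)ⁿ χ(X)`. -/
theorem stmt_16 (n : ℕ) (hn : 3 ≤ n) [NeZero n] (α : Fin n → ℝ)
    (hsin : ∀ j : Fin n, Real.sin (α (j + 1) - α j) ≠ 0) :
    (Matrix.charpoly (Pmat n α)).comp (-Polynomial.X) =
      (-1) ^ n * Matrix.charpoly (Pmat n α) := by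
  have hP := Pmat_eq n hn α (fun j => 1 / (2 * Real.sin (α (j + 1) - α j)))
    (fun j => Real.cos (α (j + 1) - α j) / Real.sin (α (j + 1) - α j) / 2)
    (fun _ => rfl) (fun _ => rfl)
  have hk := key n _ _ (by
    intro j
    have h := hsin j
    have := Real.sin_sq_add_cos_sq (α (j + 1) - α j)
    field_simp
    linarith) _ hP
  apply Polynomial.funext
  intro y
  have h := hk (y / 2)
  have e : 2 * (y / 2) = y := by ring
  rw [e] at h
  have h1 : ((Pmat n α).transpose + y • 1).det = (Pmat n α + y • 1).det := by
    rw [← Matrix.det_transpose]; simp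
  have hs : ∀ z : ℝ, Matrix.scalar (Fin n) z = z • 1 := fun z => by
    ext i j; simp [Matrix.diagonal_apply, Matrix.one_apply]
  have h2 : (-y • 1 - Pmat n α).det = (-1) ^ n * (Pmat n α + y • 1).det := by
    have : (-y • 1 - Pmat n α) = -(Pmat n α + y • 1) := by rw [neg_smul]; abel
    rw [this, Matrix.det_neg, Fintype.card_fin]
  have h3 : (y • 1 - Pmat n α).det = (-1) ^ n * (Pmat n α - y • 1).det := by
    have : (y • 1 - Pmat n α) = -(Pmat n α - y • 1) := by abel
    rw [this, Matrix.det_neg, Fintype.card_fin]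
  simp only [Polynomial.eval_comp, Polynomial.eval_mul, Polynomial.eval_neg, Polynomial.eval_X,
    Polynomial.eval_pow, Polynomial.eval_one, Matrix.eval_charpoly, hs]
  rw [h2, h3, ← h1, h]
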